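/- arXiv:1209.5904 — 5 statements merged into one kernel-verified Lean document; each statement's English description precedes it below -/
import Mathlib

section
/- Let α ∈ (0,1], let d ∈ ℕ with d > α, let i ∈ {1,…,d}, and let x, y ∈ ℝ^d satisfy xᵢ > 0, yᵢ > 0 and x ≠ y. Then |x̂ − y|^(d−α) − |x − y|^(d−α) ≤ max(2, 2(d−α)) · |x − x̂| · |x̂ − y|^(d−α−1). -/
/-- The reflection `x̂ = x − 2xᵢeᵢ` of `x ∈ ℝ^d` across the hyperplane `{y : yᵢ = 0}`. -/
noncomputable def reflectHyp (d : ℕ) (i : Fin d) (x : EuclideanSpace ℝ (Fin d)) :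
    EuclideanSpace ℝ (Fin d) :=
  x - (2 * x i) • EuclideanSpace.single i (1 : ℝ)

/-! Writing `a = |x - y|` and `b = |x̂ - y|`, the triangle inequality gives `b - a ≤ |x - x̂|`, so
it is enough to bound `b ^ p - a ^ p` by `max 1 p * (b - a) * b ^ (p - 1)` when `a ≤ b`. By
homogeneity this is the case `b = 1`: Bernoulli's inequality if `1 ≤ p`, and `t ≤ t ^ p` on `[0, 1]`
if `p ≤ 1`. -/

theorem one_sub_rpow_le_max_mul_one_sub {t : ℝ} (ht₀ : 0 ≤ t) (ht₁ : t ≤ 1) (p : ℝ) :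
    1 - t ^ p ≤ max 1 p * (1 - t) := by
  rcases le_total 1 p with hp | hp
  · have bernoulli : 1 + p * (t - 1) ≤ t ^ p := by
      simpa only [add_sub_cancel] using
        one_add_mul_self_le_rpow_one_add (s := t - 1) (by linarith) hp
    rw [max_eq_right hp]
    linarith
  · rw [max_eq_left hp, one_mul]
    exact sub_le_sub_left (Real.self_le_rpow_of_le_one ht₀ ht₁ hp) 1

theorem rpow_sub_rpow_le_max_mul_sub_mul_rpow {a b : ℝ} (ha : 0 ≤ a) (hab : a ≤ b) (hb : 0 < b)
    (p : ℝ) : b ^ p - a ^ p ≤ max 1 p * (b - a) * b ^ (p - 1) := by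
  calc b ^ p - a ^ p = b ^ p * (1 - (a / b) ^ p) := by
        rw [Real.div_rpow ha hb.le, mul_sub, mul_one,
          mul_div_cancel₀ _ (Real.rpow_pos_of_pos hb p).ne']
    _ ≤ b ^ p * (max 1 p * (1 - a / b)) := by
        gcongr
        exact one_sub_rpow_le_max_mul_one_sub (div_nonneg ha hb.le) (div_le_one_of_le₀ hab hb.le) p
    _ = max 1 p * (b - a) * b ^ (p - 1) := by
        rw [Real.rpow_sub_one hb.ne']
        field_simp

theorem stmt_2_general {X : Type*} [PseudoMetricSpace X] {x y z : X} {p : ℝ} (hp : 0 ≤ p)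
    (hzy : 0 < dist z y) :
    dist z y ^ p - dist x y ^ p ≤ max 1 p * dist x z * dist z y ^ (p - 1) := by
  rcases le_total (dist x y) (dist z y) with hle | hge
  · calc dist z y ^ p - dist x y ^ p
        ≤ max 1 p * (dist z y - dist x y) * dist z y ^ (p - 1) :=
          rpow_sub_rpow_le_max_mul_sub_mul_rpow dist_nonneg hle hzy p
      _ ≤ max 1 p * dist x z * dist z y ^ (p - 1) := by
          gcongr
          exact sub_le_iff_le_add.2 (dist_triangle_left z y x)
  · calc dist z y ^ p - dist x y ^ p ≤ 0 :=
          sub_nonpos.2 (Real.rpow_le_rpow dist_nonneg hge hp)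
      _ ≤ max 1 p * dist x z * dist z y ^ (p - 1) := by positivity

theorem reflectHyp_apply_self {d : ℕ} (i : Fin d) (x : EuclideanSpace ℝ (Fin d)) :
    reflectHyp d i x i = -x i := by
  simp only [reflectHyp, PiLp.sub_apply, PiLp.smul_apply, PiLp.single_apply, if_true, smul_eq_mul]
  ring

theorem reflectHyp_ne_of_add_ne_zero {d : ℕ} {i : Fin d} {x y : EuclideanSpace ℝ (Fin d)}
    (h : x i + y i ≠ 0) : reflectHyp d i x ≠ y := by
  rintro rfl
  exact h (by rw [reflectHyp_apply_self, add_neg_cancel])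

/-- Let `α ∈ (0,1]`, `d > α`, and let `x, y ∈ ℝ^d` satisfy `xᵢ > 0`, `yᵢ > 0`, `x ≠ y`. Then
`|x̂ − y|^(d−α) − |x − y|^(d−α) ≤ max(2, 2(d−α)) · |x − x̂| · |x̂ − y|^(d−α−1)`. -/
theorem stmt_2 (d : ℕ) (α : ℝ) (hα0 : 0 < α) (hα1 : α ≤ 1) (hd : α < (d : ℝ))
    (i : Fin d) (x y : EuclideanSpace ℝ (Fin d))
    (hx : 0 < x i) (hy : 0 < y i) (hxy : x ≠ y) :
    ‖reflectHyp d i x - y‖ ^ ((d : ℝ) - α) - ‖x - y‖ ^ ((d : ℝ) - α) ≤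
      max 2 (2 * ((d : ℝ) - α)) * ‖x - reflectHyp d i x‖ *
        ‖reflectHyp d i x - y‖ ^ ((d : ℝ) - α - 1) := by
  have hne : reflectHyp d i x ≠ y := reflectHyp_ne_of_add_ne_zero (add_pos hx hy).ne'
  simp only [← dist_eq_norm]
  refine (stmt_2_general (sub_nonneg.2 hd.le) (dist_pos.2 hne)).trans ?_
  gcongr <;> linarith
end

section
/- Fix r > 0. For all real x, y with 0 < x < r, 0 < y < r and x ≠ y, one has 0 ≤ G_r(x,y) − G_r(−x,y) ≤ (1/π) · min( 4x/|x − y| , log( 2(x + y)/|x − y| ) ). -/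
/-- `w_r(x,y) = (r² − x²)(r² − y²)/(r²(x − y)²)`. -/
noncomputable def wGreen (r x y : ℝ) : ℝ :=
  (r ^ 2 - x ^ 2) * (r ^ 2 - y ^ 2) / (r ^ 2 * (x - y) ^ 2)

/-- The Green function of the interval `(−r, r)` for the Cauchy process:
`G_r(x,y) = (1/π) log(√(w_r(x,y)) + √(1 + w_r(x,y)))`. -/
noncomputable def GGreen (r x y : ℝ) : ℝ :=
  (1 / Real.pi) * Real.log (Real.sqrt (wGreen r x y) + Real.sqrt (1 + wGreen r x y))

/-!
The Green function is `G_r = (1/π) arsinh √w_r`. Since `r² - x²` is even in `x`, reflecting `x` only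
changes the distance to `y`: `√w_r(x,y) = k √w_r(-x,y)` with `k = |x + y| / |x - y|`, and `k ≥ 1`
when `x` and `y` lie on the same side of the origin. As `arsinh` is increasing and
`arsinh (k t) ≤ log k + arsinh t` for `k ≥ 1`, the difference `π (G_r(x,y) - G_r(-x,y))` lies
between `0` and `log k`, and `log k ≤ k - 1 ≤ 2 |x| / |x - y|`.
-/

section RealInequalities

variable {x y : ℝ}

lemma arsinh_mul_le_log_add_arsinh {k : ℝ} (hk : 1 ≤ k) (t : ℝ) :
    Real.arsinh (k * t) ≤ Real.log k + Real.arsinh t := by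
  have hk₀ : 0 < k := one_pos.trans_le hk
  have hsqrt : √(1 + (k * t) ^ 2) ≤ k * √(1 + t ^ 2) := by
    calc √(1 + (k * t) ^ 2) ≤ √(k ^ 2 * (1 + t ^ 2)) := by
          gcongr
          linarith [one_le_pow₀ hk (n := 2)]
      _ = k * √(1 + t ^ 2) := by rw [Real.sqrt_mul (sq_nonneg k), Real.sqrt_sq hk₀.le]
  rw [← Real.exp_le_exp, Real.exp_add, Real.exp_log hk₀, Real.exp_arsinh, Real.exp_arsinh,
    mul_add]
  gcongr

lemma abs_sub_le_abs_add_of_mul_nonneg (hmul : 0 ≤ x * y) : |x - y| ≤ |x + y| := by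
  rw [← sq_le_sq]
  linarith

lemma one_le_abs_add_div_abs_sub (hxy : x ≠ y) (hmul : 0 ≤ x * y) :
    1 ≤ |x + y| / |x - y| :=
  (one_le_div (abs_sub_pos.mpr hxy)).mpr (abs_sub_le_abs_add_of_mul_nonneg hmul)

lemma add_ne_zero_of_ne_of_mul_nonneg (hxy : x ≠ y) (hmul : 0 ≤ x * y) : x + y ≠ 0 :=
  abs_pos.mp ((abs_sub_pos.mpr hxy).trans_le (abs_sub_le_abs_add_of_mul_nonneg hmul))

lemma log_abs_add_div_abs_sub_le (hsub : x ≠ y) (hadd : x + y ≠ 0) :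
    Real.log (|x + y| / |x - y|) ≤ 2 * |x| / |x - y| := by
  have hpos : 0 < |x - y| := abs_sub_pos.mpr hsub
  have htriangle : |x + y| ≤ 2 * |x| + |x - y| := by
    calc |x + y| = |2 * x - (x - y)| := by ring_nf
      _ ≤ |2 * x| + |x - y| := abs_sub _ _
      _ = 2 * |x| + |x - y| := by rw [abs_mul, abs_two]
  calc Real.log (|x + y| / |x - y|) ≤ |x + y| / |x - y| - 1 :=
        Real.log_le_sub_one_of_pos (div_pos (abs_pos.mpr hadd) hpos)
    _ = (|x + y| - |x - y|) / |x - y| := div_sub_one hpos.ne'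
    _ ≤ 2 * |x| / |x - y| := by
        gcongr
        linarith

end RealInequalities

section GreenFunction

variable {r x y : ℝ}

lemma wGreen_nonneg (hx : |x| ≤ r) (hy : |y| ≤ r) : 0 ≤ wGreen r x y := by
  have hx' : 0 ≤ r ^ 2 - x ^ 2 := sub_nonneg.mpr (sq_le_sq.mpr (hx.trans (le_abs_self r)))
  have hy' : 0 ≤ r ^ 2 - y ^ 2 := sub_nonneg.mpr (sq_le_sq.mpr (hy.trans (le_abs_self r)))
  unfold wGreen
  positivity

lemma gGreen_eq_arsinh (hx : |x| ≤ r) (hy : |y| ≤ r) :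
    GGreen r x y = 1 / Real.pi * Real.arsinh √(wGreen r x y) := by
  rw [GGreen, Real.arsinh, Real.sq_sqrt (wGreen_nonneg hx hy)]

lemma sqrt_wGreen_eq_mul_sqrt_wGreen_neg (r : ℝ) (hadd : x + y ≠ 0) :
    √(wGreen r x y) = |x + y| / |x - y| * √(wGreen r (-x) y) := by
  have hw : wGreen r x y = ((x + y) / (x - y)) ^ 2 * wGreen r (-x) y := by
    have hneg : (-x - y) ^ 2 = (x + y) ^ 2 := by ring
    rw [wGreen, wGreen, neg_sq, hneg]
    field_simp
  rw [hw, Real.sqrt_mul (sq_nonneg _), Real.sqrt_sq_eq_abs, abs_div]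

lemma gGreen_neg_le (hx : |x| ≤ r) (hy : |y| ≤ r) (hxy : x ≠ y) (hmul : 0 ≤ x * y) :
    GGreen r (-x) y ≤ GGreen r x y := by
  rw [gGreen_eq_arsinh hx hy, gGreen_eq_arsinh ((abs_neg x).trans_le hx) hy,
    sqrt_wGreen_eq_mul_sqrt_wGreen_neg r (add_ne_zero_of_ne_of_mul_nonneg hxy hmul)]
  gcongr
  exact le_mul_of_one_le_left (Real.sqrt_nonneg _) (one_le_abs_add_div_abs_sub hxy hmul)

lemma gGreen_sub_gGreen_neg_le (hx : |x| ≤ r) (hy : |y| ≤ r) (hxy : x ≠ y)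
    (hmul : 0 ≤ x * y) :
    GGreen r x y - GGreen r (-x) y ≤ 1 / Real.pi * Real.log (|x + y| / |x - y|) := by
  rw [gGreen_eq_arsinh hx hy, gGreen_eq_arsinh ((abs_neg x).trans_le hx) hy,
    sqrt_wGreen_eq_mul_sqrt_wGreen_neg r (add_ne_zero_of_ne_of_mul_nonneg hxy hmul), ← mul_sub]
  gcongr
  exact sub_le_iff_le_add.mpr
    (arsinh_mul_le_log_add_arsinh (one_le_abs_add_div_abs_sub hxy hmul) _)

end GreenFunction

/-- For `0 < x < r`, `0 < y < r`, `x ≠ y`: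
`0 ≤ G_r(x,y) − G_r(−x,y) ≤ (1/π) · min(4x/|x−y|, log(2(x+y)/|x−y|))`. -/
theorem stmt_8 (r x y : ℝ) (hr : 0 < r) (hx0 : 0 < x) (hxr : x < r)
    (hy0 : 0 < y) (hyr : y < r) (hxy : x ≠ y) :
    0 ≤ GGreen r x y - GGreen r (-x) y ∧
    GGreen r x y - GGreen r (-x) y ≤
      (1 / Real.pi) * min (4 * x / |x - y|) (Real.log (2 * (x + y) / |x - y|)) := by
  have hx : |x| ≤ r := (abs_of_pos hx0).trans_le hxr.le
  have hy : |y| ≤ r := (abs_of_pos hy0).trans_le hyr.le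
  have hmul : 0 ≤ x * y := (mul_pos hx0 hy0).le
  have hadd : 0 < x + y := add_pos hx0 hy0
  refine ⟨sub_nonneg.mpr (gGreen_neg_le hx hy hxy hmul),
    (gGreen_sub_gGreen_neg_le hx hy hxy hmul).trans ?_⟩
  gcongr
  refine le_min ((log_abs_add_div_abs_sub_le hxy hadd.ne').trans ?_) ?_
  · rw [abs_of_pos hx0]
    gcongr
    norm_num
  · rw [abs_of_pos hadd]
    gcongr
    linarith
end

section
/- Fix r > 0. For all real x, y with 0 < x < r/4 and 2x < y < r/2, one has G_r(x,y) − G_r(−x,y) ≥ (2/(15π)) · x/(y − x). -/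
/-!
Since `1 + w_r(x,y)` is the square of `(r² - xy) / (r(x - y))` and `S = √((r² - x²)(r² - y²))` does
not change under `x ↦ -x`, the difference `G_r(x,y) - G_r(-x,y)` is `(1/π) log t` with
`t = (A - xy)(y + x) / ((A + xy)(y - x))` and `A = S + r²`. The inequality `log t ≥ 1 - 1/t` bounds
`log t` below by `2x(A - y²) / ((A - xy)(x + y))`, hence by `2(1 - y²/r²) x/(x + y)`, for all
`0 ≤ x < y < r`. If moreover `2x ≤ y`, then `x + y ≤ 3(y - x)`.
-/

open Real

section

variable {r x y : ℝ}

lemma one_add_wGreen (hr : r ≠ 0) (hxy : x ≠ y) :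
    1 + wGreen r x y = ((r ^ 2 - x * y) / (r * (x - y))) ^ 2 := by
  have hsub : x - y ≠ 0 := sub_ne_zero.mpr hxy
  rw [wGreen]
  field_simp
  ring

lemma sqrt_wGreen (hr : 0 ≤ r) :
    √(wGreen r x y) = √((r ^ 2 - x ^ 2) * (r ^ 2 - y ^ 2)) / (r * |x - y|) := by
  rw [wGreen, ← mul_pow, sqrt_div' _ (sq_nonneg _), sqrt_sq_eq_abs, abs_mul, abs_of_nonneg hr]

lemma GGreen_eq_log_div (hr : 0 < r) (hne : x ≠ y) (hxy : x * y ≤ r ^ 2) :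
    GGreen r x y = 1 / π *
      log ((√((r ^ 2 - x ^ 2) * (r ^ 2 - y ^ 2)) + (r ^ 2 - x * y)) / (r * |x - y|)) := by
  rw [GGreen, sqrt_wGreen hr.le, one_add_wGreen hr.ne' hne, sqrt_sq_eq_abs, abs_div, abs_mul,
    abs_of_pos hr, abs_of_nonneg (sub_nonneg.mpr hxy), ← add_div]

lemma GGreen_sub_GGreen_neg (hxy : |x| < y) (hyr : y < r) :
    GGreen r x y - GGreen r (-x) y = 1 / π *
      log ((√((r ^ 2 - x ^ 2) * (r ^ 2 - y ^ 2)) + r ^ 2 - x * y) * (y + x) /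
        ((√((r ^ 2 - x ^ 2) * (r ^ 2 - y ^ 2)) + r ^ 2 + x * y) * (y - x))) := by
  obtain ⟨hneg, hlt⟩ := abs_lt.mp hxy
  have hr : 0 < r := ((abs_nonneg x).trans_lt hxy).trans hyr
  have hsub : 0 < y - x := sub_pos.mpr hlt
  have hadd : 0 < y + x := by linarith
  have hprod : |x * y| < r ^ 2 := by
    rw [abs_mul, sq]
    exact mul_lt_mul'' (hxy.trans hyr) (abs_lt.mpr ⟨by linarith, hyr⟩)
      (abs_nonneg x) (abs_nonneg y)
  obtain ⟨hprod_neg, hprod_lt⟩ := abs_lt.mp hprod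
  rw [GGreen_eq_log_div hr hlt.ne hprod_lt.le,
    GGreen_eq_log_div hr (by linarith) (by linarith), neg_sq, ← mul_sub]
  set S := √((r ^ 2 - x ^ 2) * (r ^ 2 - y ^ 2))
  have hS : 0 ≤ S := sqrt_nonneg _
  have hnum : 0 < S + (r ^ 2 - x * y) := by linarith
  have hnum_neg : 0 < S + (r ^ 2 - -x * y) := by linarith
  have habs : |x - y| = y - x := by rw [abs_sub_comm, abs_of_pos hsub]
  have habs_neg : |-x - y| = y + x := by rw [← neg_add', abs_neg, add_comm, abs_of_pos hadd]
  rw [habs, habs_neg, ← log_div (div_pos hnum (mul_pos hr hsub)).ne'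
    (div_pos hnum_neg (mul_pos hr hadd)).ne']
  congr 2
  field_simp
  ring

lemma two_mul_le_log_div {A : ℝ} (hx : 0 ≤ x) (hxy : x < y) (hyA : y ^ 2 ≤ A) :
    2 * (1 - y ^ 2 / A) * (x / (x + y)) ≤
      log ((A - x * y) * (y + x) / ((A + x * y) * (y - x))) := by
  have hy : 0 < y := hx.trans_lt hxy
  have : 0 < y - x := sub_pos.mpr hxy
  have hA : 0 < A := (pow_pos hy 2).trans_le hyA
  have hden : 0 < A - x * y := by nlinarith
  calc 2 * (1 - y ^ 2 / A) * (x / (x + y))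
      = 2 * x * (A - y ^ 2) / (A * (x + y)) := by field_simp
    _ ≤ 2 * x * (A - y ^ 2) / ((A - x * y) * (x + y)) := by
        have : 0 ≤ A - y ^ 2 := sub_nonneg.mpr hyA
        gcongr
        exact sub_le_self A (by positivity)
    _ = 1 - ((A - x * y) * (y + x) / ((A + x * y) * (y - x)))⁻¹ := by
        field_simp
        ring
    _ ≤ _ := one_sub_inv_le_log_of_pos (by positivity)

lemma le_GGreen_sub_GGreen_neg (hx : 0 ≤ x) (hxy : x < y) (hyr : y < r) :
    2 / π * (1 - y ^ 2 / r ^ 2) * (x / (x + y)) ≤ GGreen r x y - GGreen r (-x) y := by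
  have hy : 0 < y := hx.trans_lt hxy
  have hr : 0 < r := hy.trans hyr
  rw [GGreen_sub_GGreen_neg (by rwa [abs_of_nonneg hx]) hyr]
  set A := √((r ^ 2 - x ^ 2) * (r ^ 2 - y ^ 2)) + r ^ 2
  have hrA : r ^ 2 ≤ A := le_add_of_nonneg_left (sqrt_nonneg _)
  have hyA : y ^ 2 ≤ A := (pow_le_pow_left₀ hy.le hyr.le 2).trans hrA
  calc 2 / π * (1 - y ^ 2 / r ^ 2) * (x / (x + y))
      = 1 / π * (2 * (1 - y ^ 2 / r ^ 2) * (x / (x + y))) := by ring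
    _ ≤ 1 / π * (2 * (1 - y ^ 2 / A) * (x / (x + y))) := by gcongr
    _ ≤ _ := by
        gcongr
        exact two_mul_le_log_div hx hxy hyA

theorem stmt_10_general (hx : 0 < x) (hxy : 2 * x ≤ y) (hyr : y < r) :
    GGreen r x y - GGreen r (-x) y ≥ 2 / (3 * π) * (1 - y ^ 2 / r ^ 2) * (x / (y - x)) := by
  have hlt : x < y := by linarith
  have : 0 ≤ 1 - y ^ 2 / r ^ 2 := sub_nonneg.mpr <|
    div_le_one_of_le₀ (pow_le_pow_left₀ (by linarith) hyr.le 2) (sq_nonneg r)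
  have : 0 < y - x := sub_pos.mpr hlt
  have : 0 < x + y := by linarith
  have : x + y ≤ 3 * (y - x) := by linarith
  calc 2 / (3 * π) * (1 - y ^ 2 / r ^ 2) * (x / (y - x))
      = 2 / π * (1 - y ^ 2 / r ^ 2) * (x / (3 * (y - x))) := by field_simp
    _ ≤ 2 / π * (1 - y ^ 2 / r ^ 2) * (x / (x + y)) := by gcongr
    _ ≤ GGreen r x y - GGreen r (-x) y := le_GGreen_sub_GGreen_neg hx.le hlt hyr

end

/-- For `0 < x < r/4` and `2x < y < r/2`:
`G_r(x,y) − G_r(−x,y) ≥ (2/(15π)) · x/(y − x)`. -/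
theorem stmt_10 (r x y : ℝ) (hr : 0 < r) (hx0 : 0 < x) (hxr : x < r / 4)
    (hy0 : 2 * x < y) (hyr : y < r / 2) :
    GGreen r x y - GGreen r (-x) y ≥ (2 / (15 * Real.pi)) * (x / (y - x)) := by
  have hratio : 1 / 5 ≤ 1 - y ^ 2 / r ^ 2 := by
    rw [le_sub_comm, div_le_iff₀ (by positivity)]
    nlinarith
  have : 0 < y - x := by linarith
  calc GGreen r x y - GGreen r (-x) y
      ≥ 2 / (3 * π) * (1 - y ^ 2 / r ^ 2) * (x / (y - x)) :=
        stmt_10_general hx0 hy0.le (by linarith)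
    _ ≥ 2 / (3 * π) * (1 / 5) * (x / (y - x)) := by gcongr
    _ = 2 / (15 * π) * (x / (y - x)) := by ring
end

section
/- Let d ∈ ℕ, α ∈ (0,1), x₀ ∈ ℝ^d, r > 0 and A ≥ 0. Suppose u : ℝ^d → ℝ is measurable, ∫_{ℝ^d} |u(y)|/(1 + |y|)^(d+α) dy < ∞, and u is differentiable at every point of B(x₀, r) with ‖∇u(z)‖ ≤ A for all z ∈ B(x₀, r). Then the function x ↦ ∫_{ℝ^d} (u(y) − u(x))/|y − x|^(d+α) dy is continuous on B(x₀, r/2). -/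
open MeasureTheory

/-!
Let `s = d + α`. A gradient bound makes `u` Lipschitz, that is Hölder with exponent `β = 1`. Split
the integral at `‖y - x‖ = δ`. In the near part substitute `y = x + h`: the Hölder bound dominates
the integrand by `C ‖h‖ ^ (β - s)`, which is integrable and independent of `x`. In the far part the
constant `u x` separates from `u y`, and the kernel `‖y - x‖ ^ (-s)` is bounded by a multiple of
`(1 + ‖y‖) ^ (-s)`, locally uniformly in `x`, so the weighted integrability of `u` gives the
domination. The truncated kernel jumps only on a sphere, which is a null set, so dominated
convergence applies to both parts.
-/

open Metric Module Filter Topology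
open scoped NNReal

section TruncatedKernel

variable {E F : Type*} [NormedAddCommGroup E] [NormedAddCommGroup F]

/-- The Riesz-type kernel `‖z‖ ^ (-s)` with its singularity cut out: it is set to `0` on the open
ball of radius `δ` around the origin. -/
noncomputable def truncatedRieszKernel (δ s : ℝ) : E → ℝ :=
  (ball 0 δ)ᶜ.indicator fun z ↦ (‖z‖ ^ s)⁻¹

namespace truncatedRieszKernel

variable {δ s : ℝ}

lemma nonneg (z : E) : 0 ≤ truncatedRieszKernel δ s z :=
  Set.indicator_nonneg (fun _ _ ↦ by positivity) z

protected lemma measurable [MeasurableSpace E] [OpensMeasurableSpace E] :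
    Measurable (truncatedRieszKernel δ s : E → ℝ) :=
  (by fun_prop : Measurable fun z : E ↦ (‖z‖ ^ s)⁻¹).indicator measurableSet_ball.compl

protected lemma continuousAt (hδ : 0 < δ) {z : E} (hz : z ∉ sphere 0 δ) :
    ContinuousAt (truncatedRieszKernel δ s) z := by
  rcases lt_or_gt_of_ne (by simpa using hz : ‖z‖ ≠ δ) with hlt | hgt
  · have heq : truncatedRieszKernel δ s =ᶠ[𝓝 z] fun _ ↦ 0 := by
      filter_upwards [isOpen_ball.mem_nhds (mem_ball_zero_iff.2 hlt)] with w hw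
      exact Set.indicator_of_notMem (Set.notMem_compl_iff.2 hw) _
    exact continuousAt_const.congr heq.symm
  · have heq : truncatedRieszKernel δ s =ᶠ[𝓝 z] fun w ↦ (‖w‖ ^ s)⁻¹ := by
      filter_upwards [continuous_norm.continuousAt.eventually (lt_mem_nhds hgt)] with w hw
      exact Set.indicator_of_mem (by simpa using hw.le) _
    have hz_pos : 0 < ‖z‖ := hδ.trans hgt
    exact ((continuous_norm.continuousAt.rpow_const (.inl hz_pos.ne')).inv₀
      (Real.rpow_pos_of_pos hz_pos s).ne').congr heq.symm

end truncatedRieszKernel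

lemma one_add_norm_le_mul_norm_sub {x y : E} {R δ : ℝ} (hδ : 0 < δ) (hx : ‖x‖ ≤ R)
    (hxy : δ ≤ ‖y - x‖) : 1 + ‖y‖ ≤ (1 + (1 + R) / δ) * ‖y - x‖ := by
  have hR : 0 ≤ R := (norm_nonneg x).trans hx
  calc
    1 + ‖y‖ ≤ ‖y - x‖ + (1 + R) / δ * δ := by
      rw [div_mul_cancel₀ _ hδ.ne']
      linarith [norm_le_norm_sub_add y x]
    _ ≤ ‖y - x‖ + (1 + R) / δ * ‖y - x‖ := by gcongr
    _ = (1 + (1 + R) / δ) * ‖y - x‖ := by ring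

namespace truncatedRieszKernel

variable {δ s R : ℝ}

lemma le_one_add_norm_rpow (hδ : 0 < δ) (hs : 0 ≤ s) {x : E} (hx : ‖x‖ ≤ R) (y : E) :
    truncatedRieszKernel δ s (y - x) ≤ (1 + (1 + R) / δ) ^ s * ((1 + ‖y‖) ^ s)⁻¹ := by
  have hR : 0 ≤ R := (norm_nonneg x).trans hx
  refine Set.indicator_apply_le' (fun hy ↦ ?_) fun _ ↦ by positivity
  have hδy : δ ≤ ‖y - x‖ := by simpa using hy
  have hpos : 0 < ‖y - x‖ := hδ.trans_le hδy
  have hpow : (1 + ‖y‖) ^ s ≤ (1 + (1 + R) / δ) ^ s * ‖y - x‖ ^ s := by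
    rw [← Real.mul_rpow (by positivity) hpos.le]
    gcongr
    exact one_add_norm_le_mul_norm_sub hδ hx hδy
  rwa [← div_eq_mul_inv, inv_eq_one_div, div_le_div_iff₀ (by positivity) (by positivity), one_mul]

variable [NormedSpace ℝ F]

lemma norm_smul_le (hδ : 0 < δ) (hs : 0 ≤ s) {x : E} (hx : ‖x‖ ≤ R) (u : E → F) (y : E) :
    ‖truncatedRieszKernel δ s (y - x) • u y‖ ≤
      (1 + (1 + R) / δ) ^ s * (‖u y‖ / (1 + ‖y‖) ^ s) := by
  rw [norm_smul, Real.norm_of_nonneg (nonneg _), div_eq_inv_mul ‖u y‖, ← mul_assoc]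
  gcongr
  exact le_one_add_norm_rpow hδ hs hx y

variable [MeasurableSpace E] [BorelSpace E] {μ : Measure E} {u : E → F}

lemma aestronglyMeasurable_smul (hu : AEStronglyMeasurable u μ) (x : E) :
    AEStronglyMeasurable (fun y ↦ truncatedRieszKernel δ s (y - x) • u y) μ :=
  (truncatedRieszKernel.measurable.comp (measurable_sub_const x)).aestronglyMeasurable.smul hu

lemma integrable_smul (hδ : 0 < δ) (hs : 0 ≤ s) (hu : AEStronglyMeasurable u μ)
    (hint : Integrable (fun y ↦ ‖u y‖ / (1 + ‖y‖) ^ s) μ) (x : E) :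
    Integrable (fun y ↦ truncatedRieszKernel δ s (y - x) • u y) μ :=
  (hint.const_mul _).mono' (aestronglyMeasurable_smul hu x)
    (.of_forall (norm_smul_le hδ hs le_rfl u))

variable [NormedSpace ℝ E] [FiniteDimensional ℝ E] [μ.IsAddHaarMeasure]

protected lemma integrable (hδ : 0 < δ) (hs : finrank ℝ E < s) :
    Integrable (truncatedRieszKernel δ s) μ := by
  have hint : Integrable (fun y : E ↦ ‖(1 : ℝ)‖ / (1 + ‖y‖) ^ s) μ := by
    refine (integrable_one_add_norm hs).congr (.of_forall fun y ↦ ?_)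
    simp only [norm_one, one_div, Real.rpow_neg (by positivity : 0 ≤ 1 + ‖y‖)]
  have hs₀ : 0 ≤ s := (Nat.cast_nonneg _).trans hs.le
  simpa using integrable_smul hδ hs₀ aestronglyMeasurable_const hint (0 : E)

lemma continuous_integral_smul (hδ : 0 < δ) (hs : 0 ≤ s) (hu : AEStronglyMeasurable u μ)
    (hint : Integrable (fun y ↦ ‖u y‖ / (1 + ‖y‖) ^ s) μ) :
    Continuous fun x ↦ ∫ y, truncatedRieszKernel δ s (y - x) • u y ∂μ := by
  refine continuous_iff_continuousAt.2 fun x₀ ↦ ?_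
  have hbounded : ∀ᶠ x in 𝓝 x₀, ‖x‖ ≤ ‖x₀‖ + 1 :=
    continuous_norm.continuousAt.eventually (ge_mem_nhds (lt_add_one _))
  refine continuousAt_of_dominated (.of_forall (aestronglyMeasurable_smul hu))
    (hbounded.mono fun x hx ↦ .of_forall (norm_smul_le hδ hs hx u)) (hint.const_mul _) ?_
  have hsphere : ∀ᵐ y ∂μ, y ∉ sphere x₀ δ :=
    measure_eq_zero_iff_ae_notMem.1 (Measure.addHaar_sphere_of_ne_zero μ x₀ hδ.ne')
  filter_upwards [hsphere] with y hy
  have hy' : y - x₀ ∉ sphere 0 δ := by simpa [dist_eq_norm] using hy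
  exact (ContinuousAt.comp (f := (y - ·)) (truncatedRieszKernel.continuousAt hδ hy')
    (by fun_prop)).smul continuousAt_const

end truncatedRieszKernel

end TruncatedKernel

section SingularPart

variable {E F : Type*} [NormedAddCommGroup E] [NormedAddCommGroup F] [NormedSpace ℝ F]
  {u : E → F} {C β : ℝ≥0} {s δ : ℝ}

lemma norm_inv_rpow_smul_sub_le_of_holderOnWith {x h : E} (hu : HolderOnWith C β u (ball x δ))
    (hh : h ∈ ball 0 δ) :
    ‖(‖h‖ ^ s)⁻¹ • (u (x + h) - u x)‖ ≤ C * ‖h‖ ^ (β - s) := by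
  rcases eq_or_ne h 0 with rfl | h_ne
  · simp only [add_zero, sub_self, smul_zero, norm_zero]
    positivity
  have hh_pos : 0 < ‖h‖ := norm_pos_iff.2 h_ne
  have hx : x ∈ ball x δ := mem_ball_self (pos_of_mem_ball hh)
  have hxh : x + h ∈ ball x δ := by simpa using hh
  calc
    ‖(‖h‖ ^ s)⁻¹ • (u (x + h) - u x)‖ = (‖h‖ ^ s)⁻¹ * ‖u (x + h) - u x‖ := by
      rw [norm_smul, Real.norm_of_nonneg (by positivity)]
    _ ≤ (‖h‖ ^ s)⁻¹ * (C * ‖h‖ ^ (β : ℝ)) := by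
      gcongr
      simpa [dist_eq_norm] using hu.dist_le hxh hx
    _ = C * ‖h‖ ^ (β - s) := by
      rw [Real.rpow_sub hh_pos]
      ring

variable [MeasurableSpace E] [BorelSpace E] {μ : Measure E}

lemma aestronglyMeasurable_norm_inv_rpow_smul_sub [μ.IsAddLeftInvariant]
    (hu : AEStronglyMeasurable u μ) (x : E) :
    AEStronglyMeasurable (fun h ↦ (‖h‖ ^ s)⁻¹ • (u (x + h) - u x)) μ :=
  (Measurable.aestronglyMeasurable (by fun_prop)).smul
    ((hu.comp_measurePreserving (measurePreserving_add_left μ x)).sub aestronglyMeasurable_const)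

variable [NormedSpace ℝ E] [FiniteDimensional ℝ E] [μ.IsAddHaarMeasure]

lemma integrableOn_ball_norm_rpow {p : ℝ} (hp : -finrank ℝ E < p) :
    IntegrableOn (fun h : E ↦ ‖h‖ ^ p) (ball 0 δ) μ := by
  rcases subsingleton_or_nontrivial E with _ | _
  · have : IsFiniteMeasure (μ.restrict (ball 0 δ)) := ⟨by simp⟩
    exact Integrable.of_subsingleton
  refine integrableOn_ball_of_norm_le_rpow (C := 1) (α := -p) finrank_pos (by linarith)
    (.of_forall fun h ↦ ?_) (Measurable.aestronglyMeasurable (by fun_prop))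
  rw [neg_neg, one_mul, Real.norm_of_nonneg (by positivity)]

lemma integrableOn_ball_norm_inv_rpow_smul_sub (hu : AEStronglyMeasurable u μ)
    (hs : s < finrank ℝ E + β) {x : E} (hholder : HolderOnWith C β u (ball x δ)) :
    IntegrableOn (fun h ↦ (‖h‖ ^ s)⁻¹ • (u (x + h) - u x)) (ball 0 δ) μ :=
  ((integrableOn_ball_norm_rpow (by linarith)).const_mul _).mono'
    (aestronglyMeasurable_norm_inv_rpow_smul_sub hu x).restrict
    ((ae_restrict_mem measurableSet_ball).mono
      fun _ hh ↦ norm_inv_rpow_smul_sub_le_of_holderOnWith hholder hh)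

lemma continuousAt_setIntegral_ball_norm_inv_rpow_smul_sub (hδ : 0 < δ)
    (hu : AEStronglyMeasurable u μ) (hβ : 0 < β) (hs : s < finrank ℝ E + β) {x₀ : E}
    (hholder : HolderOnWith C β u (ball x₀ (2 * δ))) :
    ContinuousAt (fun x ↦ ∫ h in ball 0 δ, (‖h‖ ^ s)⁻¹ • (u (x + h) - u x) ∂μ) x₀ := by
  have hcont : ∀ h ∈ ball (0 : E) δ, ContinuousAt u (x₀ + h) := fun h hh ↦
    (hholder.continuousOn hβ).continuousAt <| isOpen_ball.mem_nhds <|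
      ball_subset_ball (by linarith) (by simpa using hh : x₀ + h ∈ ball x₀ δ)
  have hbound : ∀ᶠ x in 𝓝 x₀, ∀ᵐ h ∂μ.restrict (ball 0 δ),
      ‖(‖h‖ ^ s)⁻¹ • (u (x + h) - u x)‖ ≤ C * ‖h‖ ^ (β - s) := by
    filter_upwards [ball_mem_nhds x₀ hδ] with x hx
    filter_upwards [ae_restrict_mem measurableSet_ball] with h hh
    exact norm_inv_rpow_smul_sub_le_of_holderOnWith
      (hholder.mono (ball_subset_ball' (by linarith [mem_ball.1 hx]))) hh
  refine continuousAt_of_dominated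
    (.of_forall fun x ↦ (aestronglyMeasurable_norm_inv_rpow_smul_sub hu x).restrict) hbound
    ((integrableOn_ball_norm_rpow (by linarith)).const_mul _) ?_
  filter_upwards [ae_restrict_mem measurableSet_ball] with h hh
  have hcont_add : ContinuousAt (fun x ↦ u (x + h)) x₀ :=
    ContinuousAt.comp (f := (· + h)) (hcont h hh) (by fun_prop)
  have hcont₀ : ContinuousAt u x₀ := by simpa using hcont 0 (mem_ball_self hδ)
  exact (hcont_add.sub hcont₀).const_smul _

end SingularPart

section Hypersingular

variable {E F : Type*} [NormedAddCommGroup E] [NormedSpace ℝ E] [FiniteDimensional ℝ E]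
  [MeasurableSpace E] [BorelSpace E] [NormedAddCommGroup F] [NormedSpace ℝ F] [CompleteSpace F]
  {μ : Measure E} [μ.IsAddHaarMeasure] {u : E → F} {C β : ℝ≥0} {s δ : ℝ}

lemma integral_norm_inv_rpow_smul_sub_eq (hδ : 0 < δ) (hu : AEStronglyMeasurable u μ)
    (hs : finrank ℝ E < s) (hsβ : s < finrank ℝ E + β)
    (hint : Integrable (fun y ↦ ‖u y‖ / (1 + ‖y‖) ^ s) μ) {x : E}
    (hholder : HolderOnWith C β u (ball x δ)) :
    ∫ y, (‖y - x‖ ^ s)⁻¹ • (u y - u x) ∂μ =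
      ∫ h in ball 0 δ, (‖h‖ ^ s)⁻¹ • (u (x + h) - u x) ∂μ +
        (∫ y, truncatedRieszKernel δ s (y - x) • u y ∂μ -
          (∫ h, truncatedRieszKernel δ s h ∂μ) • u x) := by
  set k : E → ℝ := truncatedRieszKernel δ s
  set near : E → F := (ball 0 δ).indicator fun h ↦ (‖h‖ ^ s)⁻¹ • (u (x + h) - u x)
  have hsplit (y : E) : (‖y - x‖ ^ s)⁻¹ • (u y - u x) =
      near (y - x) + (k (y - x) • u y - k (y - x) • u x) := by
    by_cases hy : y - x ∈ ball 0 δ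
    · simp [near, k, truncatedRieszKernel, hy]
    · simp [near, k, truncatedRieszKernel, hy, smul_sub]
  have hnear : Integrable near μ :=
    (integrableOn_ball_norm_inv_rpow_smul_sub hu hsβ hholder).integrable_indicator
      measurableSet_ball
  have hk : Integrable k μ := truncatedRieszKernel.integrable hδ hs
  have hku : Integrable (fun y ↦ k (y - x) • u y) μ :=
    truncatedRieszKernel.integrable_smul hδ ((Nat.cast_nonneg _).trans hs.le) hu hint x
  have hkx : Integrable (fun y ↦ k (y - x) • u x) μ := (hk.comp_sub_right x).smul_const _
  calc
    ∫ y, (‖y - x‖ ^ s)⁻¹ • (u y - u x) ∂μ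
        = ∫ y, near (y - x) + (k (y - x) • u y - k (y - x) • u x) ∂μ := by simp_rw [hsplit]
    _ = ∫ y, near (y - x) ∂μ + (∫ y, k (y - x) • u y ∂μ - ∫ y, k (y - x) • u x ∂μ) := by
      rw [← integral_sub hku hkx]
      exact integral_add (hnear.comp_sub_right x) (hku.sub hkx)
    _ = _ := by
      rw [integral_sub_right_eq_self near, integral_indicator measurableSet_ball,
        integral_smul_const, integral_sub_right_eq_self k]

theorem stmt_17_general (hu : AEStronglyMeasurable u μ) (hs : finrank ℝ E < s)
    (hsβ : s < finrank ℝ E + β) (hint : Integrable (fun y ↦ ‖u y‖ / (1 + ‖y‖) ^ s) μ)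
    {x₀ : E} {t : Set E} (ht : t ∈ 𝓝 x₀) (hholder : HolderOnWith C β u t) :
    ContinuousAt (fun x ↦ ∫ y, (‖y - x‖ ^ s)⁻¹ • (u y - u x) ∂μ) x₀ := by
  obtain ⟨ε, hε, hεt⟩ := Metric.mem_nhds_iff.1 ht
  obtain ⟨δ, rfl⟩ : ∃ δ, ε = 2 * δ := ⟨ε / 2, by ring⟩
  have hδ : 0 < δ := by linarith
  have hβ : 0 < β := NNReal.coe_pos.1 (by linarith)
  have hs₀ : 0 ≤ s := (Nat.cast_nonneg _).trans hs.le
  have hnear := continuousAt_setIntegral_ball_norm_inv_rpow_smul_sub hδ hu hβ hsβ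
    (hholder.mono hεt)
  have hfar := (truncatedRieszKernel.continuous_integral_smul hδ hs₀ hu hint).continuousAt (x := x₀)
  have hu_cont : ContinuousAt u x₀ := (hholder.continuousOn hβ).continuousAt ht
  have hconst := hu_cont.const_smul (∫ h, truncatedRieszKernel δ s h ∂μ)
  refine (hnear.add (hfar.sub hconst)).congr ?_
  filter_upwards [ball_mem_nhds x₀ hδ] with x hx
  exact (integral_norm_inv_rpow_smul_sub_eq hδ hu hs hsβ hint <| hholder.mono <|
    (ball_subset_ball' (by linarith [mem_ball.1 hx])).trans hεt).symm

end Hypersingular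

/-- Suppose `u : ℝ^d → ℝ` is measurable, `∫ |u(y)|/(1+|y|)^(d+α) dy < ∞`, and `u` is
differentiable on `B(x₀,r)` with gradient bounded by `A`. Then
`x ↦ ∫ (u(y) − u(x))/|y − x|^(d+α) dy` is continuous on `B(x₀, r/2)`. -/
theorem stmt_17 (d : ℕ) (α : ℝ) (hα0 : 0 < α) (hα1 : α < 1)
    (x₀ : EuclideanSpace ℝ (Fin d)) (r A : ℝ) (hr : 0 < r) (hA : 0 ≤ A)
    (u : EuclideanSpace ℝ (Fin d) → ℝ) (hu : Measurable u)
    (hint : Integrable (fun y : EuclideanSpace ℝ (Fin d) =>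
      |u y| / (1 + ‖y‖) ^ ((d : ℝ) + α)))
    (hdiff : ∀ z ∈ Metric.ball x₀ r, DifferentiableAt ℝ u z ∧ ‖fderiv ℝ u z‖ ≤ A) :
    ContinuousOn (fun x : EuclideanSpace ℝ (Fin d) =>
        ∫ y : EuclideanSpace ℝ (Fin d), (u y - u x) / ‖y - x‖ ^ ((d : ℝ) + α))
      (Metric.ball x₀ (r / 2)) := by
  intro x hx
  have hlip : LipschitzOnWith ⟨A, hA⟩ u (ball x₀ r) :=
    (convex_ball x₀ r).lipschitzOnWith_of_nnnorm_fderiv_le (𝕜 := ℝ) (fun z hz ↦ (hdiff z hz).1)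
      fun z hz ↦ (hdiff z hz).2
  have hcont := stmt_17_general hu.aestronglyMeasurable (by simpa using hα0) (by simpa using hα1)
    hint (isOpen_ball.mem_nhds (ball_subset_ball (by linarith) hx)) (holderOnWith_one.2 hlip)
  simpa only [smul_eq_mul, ← div_eq_inv_mul] using hcont.continuousWithinAt
end

section
/- Let d ∈ ℕ, i ∈ {1,…,d}, and let x, y ∈ ℝ^d satisfy xᵢ > 0, |x| < 1/4, 2|x| < yᵢ < 1/2 and |y| < √2 · yᵢ. Then min( xᵢ·yᵢ / (4|x − y|²) , 1 ) ≥ xᵢ / (16 |x̂ − y|) = |x − x̂| / (32 |x̂ − y|). -/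
/-!
Let `x̂` be the mirror image of `x` in the hyperplane orthogonal to a unit vector `e`. Since `x̂`
and `y` lie at heights `-⟪e, x⟫` and `⟪e, y⟫` over the hyperplane, their distance is at least
`⟪e, x⟫ + ⟪e, y⟫`. The cone conditions give `‖x - y‖ ≤ 2 * ⟪e, y⟫`, so that
`‖x - y‖ ^ 2 ≤ 4 * ⟪e, y⟫ ^ 2 ≤ 4 * ⟪e, y⟫ * ‖x̂ - y‖`.
-/

section Reflection

open scoped RealInnerProductSpace

variable {E : Type*} [NormedAddCommGroup E] [InnerProductSpace ℝ E] (e x y : E)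

lemma inner_reflection_orthogonal_span_singleton :
    ⟪e, (ℝ ∙ e)ᗮ.reflection x⟫ = -⟪e, x⟫ := by
  rw [← (ℝ ∙ e)ᗮ.reflection.inner_map_map, Submodule.reflection_reflection,
    Submodule.reflection_orthogonalComplement_singleton_eq_neg, inner_neg_left]

lemma inner_add_inner_le_norm_mul_norm_reflection_sub :
    ⟪e, x⟫ + ⟪e, y⟫ ≤ ‖e‖ * ‖(ℝ ∙ e)ᗮ.reflection x - y‖ :=
  calc ⟪e, x⟫ + ⟪e, y⟫ = ⟪e, y - (ℝ ∙ e)ᗮ.reflection x⟫ := by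
        rw [inner_sub_right, inner_reflection_orthogonal_span_singleton]; ring
    _ ≤ ‖e‖ * ‖y - (ℝ ∙ e)ᗮ.reflection x‖ := real_inner_le_norm _ _
    _ = ‖e‖ * ‖(ℝ ∙ e)ᗮ.reflection x - y‖ := by rw [norm_sub_rev]

variable {e}

lemma reflection_orthogonal_span_singleton_of_norm_eq_one (he : ‖e‖ = 1) :
    (ℝ ∙ e)ᗮ.reflection x = x - (2 * ⟪e, x⟫) • e := by
  rw [Submodule.reflection_orthogonal_apply, Submodule.reflection_singleton_apply]
  simp [he, mul_smul, two_smul]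

lemma norm_sub_reflection_orthogonal_span_singleton (he : ‖e‖ = 1) :
    ‖x - (ℝ ∙ e)ᗮ.reflection x‖ = 2 * |⟪e, x⟫| := by
  rw [reflection_orthogonal_span_singleton_of_norm_eq_one x he, sub_sub_cancel, norm_smul, he,
    mul_one, Real.norm_eq_abs, abs_mul, abs_two]

end Reflection

lemma norm_sub_le_two_mul_of_norm_le_sqrt_two_mul {E : Type*} [SeminormedAddCommGroup E] {x y : E}
    {h : ℝ} (hx : 2 * ‖x‖ ≤ h) (hy : ‖y‖ ≤ √2 * h) : ‖x - y‖ ≤ 2 * h := by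
  have hh : 0 ≤ h := by linarith [norm_nonneg x]
  have h_sqrt : √2 ≤ 3 / 2 := Real.sqrt_le_iff.mpr (by norm_num)
  calc ‖x - y‖ ≤ ‖x‖ + ‖y‖ := norm_sub_le x y
    _ ≤ h / 2 + 3 / 2 * h := by
      gcongr
      · linarith
      · exact hy.trans (by gcongr)
    _ = 2 * h := by ring

lemma div_sixteen_mul_le_min_div_sq_one {a b r R : ℝ} (ha : 0 ≤ a) (hr : 0 < r)
    (hrb : r ≤ 2 * b) (hR : a + b ≤ R) : a / (16 * R) ≤ min (a * b / (4 * r ^ 2)) 1 := by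
  have hb : 0 < b := by linarith
  refine le_min ?_ ?_
  · calc a / (16 * R) ≤ a / (16 * b) := by gcongr; linarith
      _ = a * b / (4 * (2 * b) ^ 2) := by field
      _ ≤ a * b / (4 * r ^ 2) := by gcongr
  · exact div_le_one_of_le₀ (by linarith) (by linarith)

lemma reflectHyp_eq_reflection (d : ℕ) (i : Fin d) (x : EuclideanSpace ℝ (Fin d)) :
    reflectHyp d i x = (ℝ ∙ EuclideanSpace.single i (1 : ℝ))ᗮ.reflection x := by
  rw [reflection_orthogonal_span_singleton_of_norm_eq_one x (by simp)]
  simp [reflectHyp, EuclideanSpace.inner_single_left]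

open scoped RealInnerProductSpace in
theorem stmt_19_general {E : Type*} [NormedAddCommGroup E] [InnerProductSpace ℝ E] {e x y : E}
    (he : ‖e‖ = 1) (hx : 0 ≤ ⟪e, x⟫) (hne : x ≠ y) (hxy : ‖x - y‖ ≤ 2 * ⟪e, y⟫) :
    min (⟪e, x⟫ * ⟪e, y⟫ / (4 * ‖x - y‖ ^ 2)) 1 ≥
        ⟪e, x⟫ / (16 * ‖(ℝ ∙ e)ᗮ.reflection x - y‖) ∧
      ⟪e, x⟫ / (16 * ‖(ℝ ∙ e)ᗮ.reflection x - y‖) =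
        ‖x - (ℝ ∙ e)ᗮ.reflection x‖ / (32 * ‖(ℝ ∙ e)ᗮ.reflection x - y‖) := by
  have h_dist : ⟪e, x⟫ + ⟪e, y⟫ ≤ ‖(ℝ ∙ e)ᗮ.reflection x - y‖ := by
    simpa only [he, one_mul] using inner_add_inner_le_norm_mul_norm_reflection_sub e x y
  refine ⟨div_sixteen_mul_le_min_div_sq_one hx (norm_sub_pos_iff.mpr hne) hxy h_dist, ?_⟩
  rw [norm_sub_reflection_orthogonal_span_singleton x he, abs_of_nonneg hx,
    ← mul_div_mul_left _ _ (two_ne_zero' ℝ), ← mul_assoc]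
  norm_num

/-- Let `x, y ∈ ℝ^d` satisfy `xᵢ > 0`, `|x| < 1/4`, `2|x| < yᵢ < 1/2`, `|y| < √2·yᵢ`. Then
`min(xᵢyᵢ/(4|x−y|²), 1) ≥ xᵢ/(16|x̂−y|) = |x−x̂|/(32|x̂−y|)`. -/
theorem stmt_19 (d : ℕ) (i : Fin d) (x y : EuclideanSpace ℝ (Fin d))
    (hxi : 0 < x i) (hx : ‖x‖ < 1/4)
    (hy1 : 2 * ‖x‖ < y i) (hy2 : y i < 1/2) (hy3 : ‖y‖ < Real.sqrt 2 * y i) :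
    min (x i * y i / (4 * ‖x - y‖ ^ 2)) 1 ≥ x i / (16 * ‖reflectHyp d i x - y‖) ∧
    x i / (16 * ‖reflectHyp d i x - y‖) =
      ‖x - reflectHyp d i x‖ / (32 * ‖reflectHyp d i x - y‖) := by
  have hne : x ≠ y := by
    rintro rfl
    linarith [norm_nonneg x, (le_abs_self (x i)).trans (PiLp.norm_apply_le x i)]
  have hxy : ‖x - y‖ ≤ 2 * y i := norm_sub_le_two_mul_of_norm_le_sqrt_two_mul hy1.le hy3.le
  simpa [reflectHyp_eq_reflection, EuclideanSpace.inner_single_left] using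
    stmt_19_general (e := EuclideanSpace.single i (1 : ℝ)) (by simp)
      (by simpa [EuclideanSpace.inner_single_left] using hxi.le) hne
      (by simpa [EuclideanSpace.inner_single_left] using hxy)
end
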